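/- Let X be a strictly stable random variable with parameters (ν, θ, τ). Then E[(log|X|)⁷] = τ⁷ + 21τ⁵·DV + 70τ⁴·ζ(3)(ν^{3/2} − 1) + 35τ³·π⁴((1 − θ⁴)/8 + (ν² − 1)/15) + 105τ·DV³ + 420τ²·ζ(3)(ν^{3/2} − 1)·DV + 504τ²·ζ(5)(ν^{5/2} − 1) + 210ζ(3)(ν^{3/2} − 1)·DV² + 105τ·π⁴((1 − θ⁴)/8 + (ν² − 1)/15)·DV + 56τ·π⁶((1 − θ⁶)/32 + (ν³ − 1)/63) + 504ζ(5)(ν^{5/2} − 1)·DV + 70ζ(3)(ν^{3/2} − 1)·π⁴((1 − θ⁴)/8 + (ν² − 1)/15) + 280τ·ζ(3)²(ν^{3/2} − 1)² + 720ζ(7)(ν^{7/2} − 1) + 105τ³·DV². -/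

import Mathlib

open MeasureTheory ProbabilityTheory

/-- The real value of the Riemann zeta function at a real argument. -/
noncomputable def zetaR (s : ℝ) : ℝ := (riemannZeta (s : ℂ)).re

/-- A real random variable `X` is strictly stable with parameters `(ν, θ, τ)` if
`ν ≥ 1/4`, `|θ| ≤ min 1 (2√ν − 1)`, `P(X = 0) = 0`, `log |X|` has finite absolute
moments of every order, and the characteristic function of `X` is
`E[exp(i k X)] = exp(−exp(ν^{−1/2}(log|k| + τ − i(π/2)θ sign k) + C(ν^{−1/2} − 1)))`
for all real `k ≠ 0`, where `C` is the Euler–Mascheroni constant. -/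
def IsStrictlyStable {Ω : Type*} [MeasureSpace Ω] (X : Ω → ℝ) (ν θ τ : ℝ) : Prop :=
  Measurable X ∧ (1/4 : ℝ) ≤ ν ∧ |θ| ≤ min 1 (2 * Real.sqrt ν - 1) ∧
  (ℙ : Measure Ω) {ω | X ω = 0} = 0 ∧
  (∀ p : ℕ, Integrable (fun ω => (abs (Real.log (abs (X ω)))) ^ p)) ∧
  ∀ k : ℝ, k ≠ 0 →
    (∫ ω, Complex.exp (Complex.I * (k : ℂ) * (X ω : ℂ))) =
      Complex.exp (-Complex.exp
        (((ν ^ (-(1/2) : ℝ) : ℝ) : ℂ) *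
            (((Real.log |k| : ℝ) : ℂ) + (τ : ℂ) -
              Complex.I * ((Real.pi / 2 : ℝ) : ℂ) * (θ : ℂ) * ((Real.sign k : ℝ) : ℂ)) +
          ((Real.eulerMascheroniConstant : ℝ) : ℂ) * (((ν ^ (-(1/2) : ℝ) : ℝ) : ℂ) - 1)))

open Filter Topology

/-!
Integrating the characteristic function `φ` of `X` against `t ^ (s - 1) * exp (-ε * t)` and letting
`ε → 0` gives `Γ(s) cos(π s / 2) E|X|^(-s)` for `0 < s < 1`, while `φ(t) = exp(-c t^(1/√ν))` for
`t > 0` turns the same limit into a Gamma value times a power of `c`. The factor `exp (-ε * t)` is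
what covers the degenerate case `ν = |θ| = 1`, in which `φ` does not decay. Hence on `(-1, 0)` the
cumulant generating function of `log |X|` is a sum of `log Γ` and `log cos` terms, whose Taylor
coefficients at `0` are zeta values. As all moments of `log |X|` are finite, this one-sided
information identifies them, and the seventh one is the complete Bell polynomial in the cumulants.
-/

/-! ### The power series of `log Γ (1 - x)` -/

theorem hasSum_zetaR_natCast {k : ℕ} (hk : 1 < k) :
    HasSum (fun m : ℕ ↦ 1 / ((m : ℝ) + 1) ^ k) (zetaR k) := by
  have hsum : Summable fun n : ℕ ↦ 1 / (n : ℝ) ^ k := Real.summable_one_div_nat_pow.2 hk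
  have hzeta : zetaR k = ∑' n : ℕ, 1 / (n : ℝ) ^ k := by
    rw [zetaR, Complex.ofReal_natCast, zeta_nat_eq_tsum_of_gt_one hk, ← Complex.ofReal_re (∑' _, _)]
    push_cast
    rfl
  rw [hzeta, hsum.tsum_eq_zero_add]
  simpa [(zero_lt_one.trans hk).ne'] using ((summable_nat_add_iff 1).2 hsum).hasSum

theorem zetaR_two : zetaR 2 = Real.pi ^ 2 / 6 := by
  rw [zetaR, Complex.ofReal_ofNat, riemannZeta_two]
  norm_cast

theorem zetaR_four : zetaR 4 = Real.pi ^ 4 / 90 := by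
  rw [zetaR, Complex.ofReal_ofNat, riemannZeta_four]
  norm_cast

theorem zetaR_six : zetaR 6 = Real.pi ^ 6 / 945 := by
  have hodd : bernoulli' 5 = 0 := bernoulli'_eq_zero_of_odd (by decide) (by norm_num)
  have hbernoulli : bernoulli (2 * 3) = 1 / 42 := by
    rw [bernoulli_eq_bernoulli'_of_ne_one (by decide), bernoulli'_def]
    norm_num [Finset.sum_range_succ, hodd, Nat.choose]
  have hzeta : riemannZeta 6 = ((Real.pi ^ 6 / 945 : ℝ) : ℂ) := by
    have h := riemannZeta_two_mul_nat (k := 3) (by decide)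
    rw [hbernoulli] at h
    push_cast [Nat.factorial] at h ⊢
    norm_num at h
    linear_combination h
  rw [zetaR, Complex.ofReal_ofNat, hzeta, Complex.ofReal_re]

theorem hasSum_pow_div_log_sub_self {y : ℝ} (hy : |y| < 1) :
    HasSum (fun j : ℕ ↦ y ^ (j + 2) / ((j + 2 : ℕ) : ℝ)) (-Real.log (1 - y) - y) := by
  have h := (hasSum_nat_add_iff' 1).2 (Real.hasSum_pow_div_log_of_abs_lt_one hy)
  simpa [add_assoc, one_add_one_eq_two] using h

theorem sum_range_log_add_one (n : ℕ) :
    ∑ m ∈ Finset.range n, Real.log ((m : ℝ) + 1) = Real.log n.factorial := by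
  rw [← Real.log_prod fun m _ ↦ by positivity, ← Finset.prod_range_add_one_eq_factorial]
  push_cast
  rfl

theorem logGammaSeq_one_sub {x : ℝ} (hx : x < 1) (n : ℕ) :
    Real.BohrMollerup.logGammaSeq (1 - x) n =
      ∑ m ∈ Finset.range (n + 1), (-Real.log (1 - x / (m + 1)) - x / (m + 1)) +
        x * (harmonic (n + 1) - Real.log n) - (Real.log (n + 1) - Real.log n) := by
  have hlog (m : ℕ) :
      Real.log (1 - x + m) = Real.log ((m : ℝ) + 1) + Real.log (1 - x / (m + 1)) := by
    have hm : (0 : ℝ) < m + 1 := by positivity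
    have hsplit : 1 - x + m = (m + 1) * (1 - x / (m + 1)) := by field_simp; ring
    have hpos : 0 < 1 - x + m := by linarith [m.cast_nonneg (α := ℝ)]
    rw [hsplit, Real.log_mul hm.ne' (right_ne_zero_of_mul (hsplit ▸ hpos.ne'))]
  have hharmonic : ∑ m ∈ Finset.range (n + 1), x / ((m : ℝ) + 1) = x * harmonic (n + 1) := by
    simp [harmonic, Finset.mul_sum, div_eq_mul_inv]
  simp only [Real.BohrMollerup.logGammaSeq, hlog, Finset.sum_add_distrib, Finset.sum_sub_distrib,
    Finset.sum_neg_distrib, hharmonic]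
  rw [Finset.sum_range_succ fun m : ℕ ↦ Real.log ((m : ℝ) + 1), sum_range_log_add_one]
  ring

theorem hasSum_log_Gamma_one_sub_weierstrass {x : ℝ} (hx : x < 1) :
    HasSum (fun m : ℕ ↦ -Real.log (1 - x / (m + 1)) - x / (m + 1))
      (Real.log (Real.Gamma (1 - x)) - Real.eulerMascheroniConstant * x) := by
  have hnonneg (m : ℕ) : 0 ≤ -Real.log (1 - x / (m + 1)) - x / (m + 1) := by
    have hpos : 0 < 1 - x / (m + 1) := by
      rw [sub_pos, div_lt_one (by positivity)]
      linarith [m.cast_nonneg (α := ℝ)]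
    linarith [Real.log_le_sub_one_of_pos hpos]
  rw [hasSum_iff_tendsto_nat_of_nonneg hnonneg, ← tendsto_add_atTop_iff_nat 1]
  have hharmonic := (tendsto_add_atTop_iff_nat 1).2 Real.tendsto_harmonic_sub_log
  have hlog := Real.tendsto_log_nat_add_one_sub_log
  have hGamma := Real.BohrMollerup.tendsto_log_gamma (sub_pos.2 hx)
  refine ((hGamma.sub ((hharmonic.add hlog).const_mul x)).add hlog).congr (fun n ↦ ?_)
    |>.trans_eq (by ring_nf)
  rw [logGammaSeq_one_sub hx]
  push_cast
  ring

/-- The Taylor coefficients of `x ↦ log Γ (1 - x)` at `0`. -/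
noncomputable def logGammaCoeff : ℕ → ℝ
  | 0 => 0
  | 1 => Real.eulerMascheroniConstant
  | n + 2 => zetaR (n + 2 : ℕ) / (n + 2 : ℕ)

theorem norm_div_pow_div_le (x : ℝ) (m j : ℕ) :
    ‖(x / ((m : ℝ) + 1)) ^ (j + 2) / ((j + 2 : ℕ) : ℝ)‖ ≤
      1 / ((m : ℝ) + 1) ^ 2 * |x| ^ (j + 2) := by
  have hm : (1 : ℝ) ≤ m + 1 := by simp
  have hj : (1 : ℝ) ≤ (j + 2 : ℕ) := by norm_cast; omega
  calc ‖(x / ((m : ℝ) + 1)) ^ (j + 2) / ((j + 2 : ℕ) : ℝ)‖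
      = |x| ^ (j + 2) / (((m : ℝ) + 1) ^ (j + 2) * (j + 2 : ℕ)) := by
        rw [norm_div, norm_pow, norm_div, Real.norm_natCast, Real.norm_eq_abs, Real.norm_eq_abs,
          abs_of_pos (zero_lt_one.trans_le hm), div_pow, div_div]
    _ ≤ |x| ^ (j + 2) / ((m : ℝ) + 1) ^ 2 := by
        gcongr
        calc ((m : ℝ) + 1) ^ 2 ≤ ((m : ℝ) + 1) ^ (j + 2) := pow_le_pow_right₀ hm (by omega)
          _ ≤ _ := le_mul_of_one_le_right (by positivity) hj
    _ = _ := by rw [one_div_mul_eq_div]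

theorem summable_div_pow_div {x : ℝ} (hx : |x| < 1) :
    Summable fun q : ℕ × ℕ ↦ (x / ((q.1 : ℝ) + 1)) ^ (q.2 + 2) / ((q.2 + 2 : ℕ) : ℝ) := by
  have hgeom : Summable fun j : ℕ ↦ |x| ^ (j + 2) :=
    (summable_nat_add_iff 2).2 (summable_geometric_of_lt_one (abs_nonneg x) hx)
  exact .of_norm_bounded
    ((hasSum_zetaR_natCast one_lt_two).summable.mul_of_nonneg hgeom
      (fun m ↦ by positivity) (fun j ↦ by positivity))
    fun q ↦ norm_div_pow_div_le x q.1 q.2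

theorem hasSum_logGammaCoeff {x : ℝ} (hx : |x| < 1) :
    HasSum (fun n ↦ logGammaCoeff n * x ^ n) (Real.log (Real.Gamma (1 - x))) := by
  have hrow (m : ℕ) : HasSum (fun j : ℕ ↦ (x / ((m : ℝ) + 1)) ^ (j + 2) / ((j + 2 : ℕ) : ℝ))
      (-Real.log (1 - x / (m + 1)) - x / (m + 1)) := by
    refine hasSum_pow_div_log_sub_self ?_
    rw [abs_div, abs_of_pos (by positivity : (0 : ℝ) < m + 1), div_lt_one (by positivity)]
    linarith [m.cast_nonneg (α := ℝ)]
  have hcol (j : ℕ) : HasSum (fun m : ℕ ↦ (x / ((m : ℝ) + 1)) ^ (j + 2) / ((j + 2 : ℕ) : ℝ))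
      (logGammaCoeff (j + 2) * x ^ (j + 2)) := by
    convert! (hasSum_zetaR_natCast (by omega : 1 < j + 2)).mul_left (x ^ (j + 2) / (j + 2 : ℕ))
      using 1
    · funext m
      rw [div_pow]
      ring
    · rw [logGammaCoeff]
      ring
  have hdouble := (summable_div_pow_div hx).hasSum
  have hvalue := (hdouble.prod_fiberwise hrow).unique
    (hasSum_log_Gamma_one_sub_weierstrass (lt_of_abs_lt hx))
  have hswap := ((Equiv.prodComm ℕ ℕ).hasSum_iff.2 hdouble).prod_fiberwise hcol
  rw [← hasSum_nat_add_iff' 2]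
  convert! hswap using 1
  rw [hvalue]
  simp [Finset.sum_range_succ, logGammaCoeff]

theorem sin_pi_mul_mul_Gamma_mul_Gamma {y : ℝ} (hy : |y| < 1) :
    Real.sin (Real.pi * y) * (Real.Gamma (1 - y) * Real.Gamma (1 + y)) = Real.pi * y := by
  rcases eq_or_ne y 0 with rfl | hy0
  · simp
  obtain ⟨hneg, hpos⟩ := abs_lt.1 hy
  have hsin : Real.sin (Real.pi * y) ≠ 0 := by
    rw [Ne, Real.sin_eq_zero_iff_of_lt_of_lt (by nlinarith [Real.pi_pos])
      (by nlinarith [Real.pi_pos])]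
    exact mul_ne_zero Real.pi_ne_zero hy0
  have hreflection := (eq_div_iff hsin).1 (Real.Gamma_mul_Gamma_one_sub y)
  rw [add_comm 1 y, Real.Gamma_add_one hy0]
  linear_combination y * hreflection

theorem cos_pi_mul_div_two_pos {x : ℝ} (hx : |x| < 1) : 0 < Real.cos (Real.pi * x / 2) := by
  obtain ⟨hneg, hpos⟩ := abs_lt.1 hx
  exact Real.cos_pos_of_mem_Ioo ⟨by nlinarith [Real.pi_pos], by nlinarith [Real.pi_pos]⟩

theorem cos_pi_mul_div_two_mul_Gamma_mul_Gamma {x : ℝ} (hx : |x| < 1) :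
    Real.cos (Real.pi * x / 2) * (Real.Gamma (1 - x) * Real.Gamma (1 + x)) =
      Real.Gamma (1 - x / 2) * Real.Gamma (1 + x / 2) := by
  rcases eq_or_ne x 0 with rfl | hx0
  · simp
  have hwhole := sin_pi_mul_mul_Gamma_mul_Gamma hx
  have hhalf := sin_pi_mul_mul_Gamma_mul_Gamma (y := x / 2)
    (by rw [abs_div, abs_two]; linarith [abs_nonneg x])
  rw [show Real.pi * x = 2 * (Real.pi * (x / 2)) by ring, Real.sin_two_mul] at hwhole
  have hsin : Real.sin (Real.pi * (x / 2)) ≠ 0 := by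
    rintro h
    simp [h, Real.pi_ne_zero, hx0] at hhalf
  refine mul_left_cancel₀ hsin ?_
  rw [mul_div_assoc]
  linear_combination hwhole / 2 - hhalf

/-- The Taylor coefficients of `x ↦ log (cos (π x / 2))` at `0`, as they come out of
`cos (π x / 2) * (Γ (1 - x) * Γ (1 + x)) = Γ (1 - x / 2) * Γ (1 + x / 2)`. -/
noncomputable def logCosCoeff (n : ℕ) : ℝ :=
  logGammaCoeff n * ((1 / 2) ^ n + (-1 / 2) ^ n - 1 - (-1) ^ n)

theorem hasSum_logCosCoeff {x : ℝ} (hx : |x| < 1) :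
    HasSum (fun n ↦ logCosCoeff n * x ^ n) (Real.log (Real.cos (Real.pi * x / 2))) := by
  have hGamma {y : ℝ} (hy : |y| < 1) : 0 < Real.Gamma (1 - y) :=
    Real.Gamma_pos_of_pos (sub_pos.2 (lt_of_abs_lt hy))
  have hx2 : |x / 2| < 1 := by rw [abs_div, abs_two]; linarith [abs_nonneg x]
  have hxn : |-x| < 1 := by rwa [abs_neg]
  have hxn2 : |-(x / 2)| < 1 := by rwa [abs_neg]
  have hcos := cos_pi_mul_div_two_mul_Gamma_mul_Gamma hx
  rw [← sub_neg_eq_add 1 x, ← sub_neg_eq_add 1 (x / 2),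
    ← eq_div_iff (mul_pos (hGamma hx) (hGamma hxn)).ne'] at hcos
  rw [hcos, Real.log_div (mul_pos (hGamma hx2) (hGamma hxn2)).ne'
    (mul_pos (hGamma hx) (hGamma hxn)).ne', Real.log_mul (hGamma hx2).ne' (hGamma hxn2).ne',
    Real.log_mul (hGamma hx).ne' (hGamma hxn).ne']
  convert! ((hasSum_logGammaCoeff hx2).add (hasSum_logGammaCoeff hxn2)).sub
    ((hasSum_logGammaCoeff hx).add (hasSum_logGammaCoeff hxn)) using 2 with n
  rw [logCosCoeff, div_pow x, neg_pow x, neg_pow (x / 2), div_pow x, div_pow (-1), div_pow 1,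
    one_pow]
  ring

/-! ### Moments, cumulants and the moment generating function -/

theorem analyticAt_and_iteratedDeriv_of_hasSum {f : ℝ → ℝ} {c : ℕ → ℝ}
    (h : ∀ᶠ t in 𝓝 (0 : ℝ), HasSum (fun n ↦ c n * t ^ n) (f t)) :
    AnalyticAt ℝ f 0 ∧ ∀ n, iteratedDeriv n f 0 = n.factorial * c n := by
  have hseries : HasFPowerSeriesAt f (FormalMultilinearSeries.ofScalars ℝ c) 0 := by
    rw [hasFPowerSeriesAt_iff]
    filter_upwards [h] with t ht
    simpa [mul_comm] using ht
  refine ⟨hseries.analyticAt, fun n ↦ ?_⟩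
  have hcoeff := congrArg (·.coeff n)
    (hseries.eq_formalMultilinearSeries hseries.analyticAt.hasFPowerSeriesAt)
  simp only [FormalMultilinearSeries.coeff_ofScalars] at hcoeff
  rw [hcoeff]
  field_simp

theorem iteratedDeriv_succ_exp_comp {f : ℝ → ℝ} {x : ℝ} (hf : AnalyticAt ℝ f x) (n : ℕ) :
    iteratedDeriv (n + 1) (fun t ↦ Real.exp (f t)) x =
      ∑ i ∈ Finset.range (n + 1), (n.choose i : ℝ) * iteratedDeriv (i + 1) f x *
        iteratedDeriv (n - i) (fun t ↦ Real.exp (f t)) x := by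
  have hderiv : deriv (fun t ↦ Real.exp (f t)) =ᶠ[𝓝 x] deriv f * fun t ↦ Real.exp (f t) := by
    filter_upwards [hf.eventually_analyticAt] with t ht
    simp [deriv_exp ht.differentiableAt, mul_comm]
  have hexp : AnalyticAt ℝ (fun t ↦ Real.exp (f t)) x := hf.rexp
  rw [iteratedDeriv_succ', hderiv.iteratedDeriv_eq,
    iteratedDeriv_mul hf.deriv.contDiffAt hexp.contDiffAt]
  simp only [iteratedDeriv_succ']

theorem seventh_moment_eq_bell {R : Type*} [CommRing R] {m κ : ℕ → R} (h0 : m 0 = 1)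
    (hrec : ∀ n, m (n + 1) = ∑ i ∈ Finset.range (n + 1), (n.choose i : R) * κ (i + 1) * m (n - i)) :
    m 7 = κ 1 ^ 7 + 21 * κ 1 ^ 5 * κ 2 + 35 * κ 1 ^ 4 * κ 3 + 105 * κ 1 ^ 3 * κ 2 ^ 2
      + 35 * κ 1 ^ 3 * κ 4 + 210 * κ 1 ^ 2 * κ 2 * κ 3 + 105 * κ 1 * κ 2 ^ 3
      + 21 * κ 1 ^ 2 * κ 5 + 105 * κ 1 * κ 2 * κ 4 + 70 * κ 1 * κ 3 ^ 2 + 7 * κ 1 * κ 6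
      + 105 * κ 2 ^ 2 * κ 3 + 21 * κ 2 * κ 5 + 35 * κ 3 * κ 4 + κ 7 := by
  simp only [hrec, h0, Finset.sum_range_succ, Finset.range_one, Finset.sum_singleton, Nat.choose,
    Nat.reduceAdd, Nat.reduceSub, Nat.add_one_sub_one, tsub_zero, zero_tsub, tsub_self,
    Nat.cast_one, Nat.cast_ofNat, zero_add, add_zero, one_mul, mul_one]
  ring

theorem tendsto_integral_pow_mul_exp_nhdsLT_zero {Ω : Type*} [MeasurableSpace Ω] {μ : Measure Ω}
    {L : Ω → ℝ} {n : ℕ} {b : ℝ} (hL : AEMeasurable L μ) (hb : b < 0)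
    (hpow : Integrable (fun ω ↦ L ω ^ n) μ)
    (hexp : Integrable (fun ω ↦ L ω ^ n * Real.exp (b * L ω)) μ) :
    Tendsto (fun t ↦ ∫ ω, L ω ^ n * Real.exp (t * L ω) ∂μ) (𝓝[<] 0) (𝓝 (∫ ω, L ω ^ n ∂μ)) := by
  refine tendsto_integral_filter_of_dominated_convergence
    (fun ω ↦ ‖L ω ^ n‖ + ‖L ω ^ n * Real.exp (b * L ω)‖)
    (.of_forall fun t ↦ by fun_prop) ?_ (hpow.norm.add hexp.norm) (ae_of_all _ fun ω ↦ ?_)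
  · filter_upwards [Ioo_mem_nhdsLT hb] with t ht
    refine ae_of_all _ fun ω ↦ ?_
    have hbound : Real.exp (t * L ω) ≤ 1 + Real.exp (b * L ω) := by
      rcases le_total 0 (L ω) with hω | hω
      · have := Real.exp_le_one_iff.2 (mul_nonpos_of_nonpos_of_nonneg ht.2.le hω)
        linarith [Real.exp_pos (b * L ω)]
      · have := Real.exp_le_exp.2 (mul_le_mul_of_nonpos_right ht.1.le hω)
        linarith
    rw [norm_mul, norm_mul, Real.norm_of_nonneg (Real.exp_nonneg _),
      Real.norm_of_nonneg (Real.exp_nonneg _), ← mul_one_add]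
    gcongr
  · have hcont : Continuous fun t : ℝ ↦ L ω ^ n * Real.exp (t * L ω) := by fun_prop
    simpa using (hcont.tendsto 0).mono_left nhdsWithin_le_nhds

theorem integral_pow_eq_iteratedDeriv_of_mgf_eq {Ω : Type*} [MeasurableSpace Ω] {μ : Measure Ω}
    {L : Ω → ℝ} {f : ℝ → ℝ} {n : ℕ} (hL : AEMeasurable L μ)
    (hpow : Integrable (fun ω ↦ L ω ^ n) μ) (hf : AnalyticAt ℝ f 0)
    (hmgf : ∀ᶠ t in 𝓝[<] (0 : ℝ), t ∈ integrableExpSet L μ ∧ mgf L μ t = f t) :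
    ∫ ω, L ω ^ n ∂μ = iteratedDeriv n f 0 := by
  obtain ⟨a, ha, hIoo⟩ := (mem_nhdsLT_iff_exists_Ioo_subset).1 hmgf
  have hinterior : Set.Ioo a 0 ⊆ interior (integrableExpSet L μ) :=
    interior_maximal (fun t ht ↦ (hIoo ht).1) isOpen_Ioo
  have hderiv : ∀ᶠ t in 𝓝[<] (0 : ℝ),
      ∫ ω, L ω ^ n * Real.exp (t * L ω) ∂μ = iteratedDeriv n f t := by
    filter_upwards [Ioo_mem_nhdsLT ha] with t ht
    rw [← iteratedDeriv_mgf (hinterior ht)]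
    refine EventuallyEq.iteratedDeriv_eq n ?_
    filter_upwards [isOpen_Ioo.mem_nhds ht] with u hu using (hIoo hu).2
  have hcont : Tendsto (iteratedDeriv n f) (𝓝[<] 0) (𝓝 (iteratedDeriv n f 0)) := by
    rw [iteratedDeriv_eq_iterate]
    exact (hf.iterated_deriv n).continuousAt.tendsto.mono_left nhdsWithin_le_nhds
  obtain ⟨b, hab, hb0⟩ := exists_between (Set.mem_Iio.1 ha)
  refine tendsto_nhds_unique (tendsto_integral_pow_mul_exp_nhdsLT_zero hL hb0 hpow ?_)
    (hcont.congr' (hderiv.mono fun _ ↦ Eq.symm))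
  exact integrable_pow_mul_exp_of_mem_interior_integrableExpSet (hinterior ⟨hab, hb0⟩) n

/-! ### The cumulants of `log |X|` -/

/-- The cumulant generating function of `log |X|` for strictly stable `X` with `ν = r ^ 2`. -/
noncomputable def stableLogCgf (r θ τ t : ℝ) : ℝ :=
  (τ + Real.eulerMascheroniConstant * (1 - r)) * t
    + Real.log (Real.Gamma (1 - r * t)) - Real.log (Real.Gamma (1 - t))
    + Real.log (Real.cos (Real.pi * (θ * t) / 2)) - Real.log (Real.cos (Real.pi * t / 2))

/-- The cumulants of `log |X|` for strictly stable `X` with `ν = r ^ 2`. -/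
noncomputable def stableLogCumulant (r θ τ : ℝ) (n : ℕ) : ℝ :=
  n.factorial * ((if n = 1 then τ + Real.eulerMascheroniConstant * (1 - r) else 0)
    + logGammaCoeff n * (r ^ n - 1) + logCosCoeff n * (θ ^ n - 1))

theorem eventually_hasSum_stableLogCgf (r θ τ : ℝ) :
    ∀ᶠ t in 𝓝 (0 : ℝ),
      HasSum (fun n ↦ stableLogCumulant r θ τ n / n.factorial * t ^ n) (stableLogCgf r θ τ t) := by
  have hsmall (a : ℝ) : ∀ᶠ t in 𝓝 (0 : ℝ), |a * t| < 1 := by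
    have hcont : Continuous fun t : ℝ ↦ |a * t| := by fun_prop
    exact hcont.tendsto' 0 0 (by simp) |>.eventually_lt_const one_pos
  filter_upwards [hsmall r, hsmall θ, hsmall 1] with t hr hθ ht
  rw [one_mul] at ht
  rw [stableLogCgf]
  convert! (((hasSum_ite_eq 1 ((τ + Real.eulerMascheroniConstant * (1 - r)) * t)).add
    (hasSum_logGammaCoeff hr)).sub (hasSum_logGammaCoeff ht)).add
    (hasSum_logCosCoeff hθ) |>.sub (hasSum_logCosCoeff ht) using 2 with n
  rw [stableLogCumulant, mul_div_cancel_left₀ _ (mod_cast n.factorial_ne_zero), mul_pow, mul_pow]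
  split_ifs with hn
  · subst hn
    ring
  · ring

theorem analyticAt_stableLogCgf (r θ τ : ℝ) : AnalyticAt ℝ (stableLogCgf r θ τ) 0 :=
  (analyticAt_and_iteratedDeriv_of_hasSum (eventually_hasSum_stableLogCgf r θ τ)).1

theorem iteratedDeriv_stableLogCgf_zero (r θ τ : ℝ) (n : ℕ) :
    iteratedDeriv n (stableLogCgf r θ τ) 0 = stableLogCumulant r θ τ n := by
  rw [(analyticAt_and_iteratedDeriv_of_hasSum (eventually_hasSum_stableLogCgf r θ τ)).2]
  field_simp

theorem stableLogCumulant_one (r θ τ : ℝ) : stableLogCumulant r θ τ 1 = τ := by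
  simp only [stableLogCumulant, logCosCoeff, logGammaCoeff, if_true, Nat.factorial_one,
    Nat.cast_one, pow_one]
  ring

theorem logGammaCoeff_of_one_lt {n : ℕ} (hn : 1 < n) : logGammaCoeff n = zetaR n / n := by
  obtain ⟨m, rfl⟩ := Nat.exists_eq_add_of_lt hn
  rw [add_right_comm, Nat.add_comm (1 + 1)]
  rfl

theorem stableLogCumulant_of_odd (r θ τ : ℝ) {n : ℕ} (hn : 1 < n) (hodd : Odd n) :
    stableLogCumulant r θ τ n = (n - 1).factorial * zetaR n * (r ^ n - 1) := by
  rw [stableLogCumulant, logCosCoeff, if_neg hn.ne', logGammaCoeff_of_one_lt hn,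
    neg_div, hodd.neg_pow, hodd.neg_one_pow, ← Nat.mul_factorial_pred (by omega), Nat.cast_mul]
  field_simp
  ring

theorem stableLogCumulant_of_even (r θ τ : ℝ) {n : ℕ} (hn : 1 < n) (heven : Even n) :
    stableLogCumulant r θ τ n =
      (n - 1).factorial * zetaR n * (r ^ n - 1 + 2 * (1 - (1 / 2) ^ n) * (1 - θ ^ n)) := by
  rw [stableLogCumulant, logCosCoeff, if_neg hn.ne', logGammaCoeff_of_one_lt hn,
    neg_div, heven.neg_pow, heven.neg_one_pow, ← Nat.mul_factorial_pred (by omega), Nat.cast_mul]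
  field_simp
  ring

/-! ### Mellin transforms at a real exponent -/

/-- The measure `t ^ (s - 1) dt` on the positive half-line, integration against which is the
Mellin transform at the real exponent `s`. -/
noncomputable def mellinMeasure (s : ℝ) : Measure ℝ :=
  (volume.restrict (Set.Ioi 0)).withDensity fun t ↦ ENNReal.ofReal (t ^ (s - 1))

instance (s : ℝ) : SFinite (mellinMeasure s) := by
  unfold mellinMeasure
  infer_instance

theorem ae_mellinMeasure_pos (s : ℝ) : ∀ᵐ t ∂mellinMeasure s, 0 < t :=
  (withDensity_absolutelyContinuous _ _).ae_le (ae_restrict_mem measurableSet_Ioi)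

section MellinMeasure

variable {E : Type*} [NormedAddCommGroup E] [NormedSpace ℂ E]

theorem cpow_smul_ae_eq_toReal_ofReal_rpow_smul (f : ℝ → E) (s : ℝ) :
    (fun t : ℝ ↦ (t : ℂ) ^ ((s : ℂ) - 1) • f t) =ᵐ[volume.restrict (Set.Ioi 0)]
      fun t ↦ (ENNReal.ofReal (t ^ (s - 1))).toReal • f t := by
  filter_upwards [ae_restrict_mem measurableSet_Ioi] with t ht
  have ht0 : 0 ≤ t := le_of_lt ht
  rw [ENNReal.toReal_ofReal (Real.rpow_nonneg ht0 _), ← Complex.coe_smul, Complex.ofReal_cpow ht0]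
  push_cast
  rfl

theorem mellinConvergent_ofReal_iff_integrable (f : ℝ → E) (s : ℝ) :
    MellinConvergent f s ↔ Integrable f (mellinMeasure s) := by
  rw [MellinConvergent, IntegrableOn, mellinMeasure, integrable_withDensity_iff_integrable_smul'
    (by fun_prop) (by simp), integrable_congr (cpow_smul_ae_eq_toReal_ofReal_rpow_smul f s)]

theorem mellin_ofReal_eq_integral (f : ℝ → E) (s : ℝ) :
    mellin f s = ∫ t, f t ∂mellinMeasure s := by
  rw [mellin, mellinMeasure, integral_withDensity_eq_integral_toReal_smul (by fun_prop) (by simp),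
    integral_congr_ae (cpow_smul_ae_eq_toReal_ofReal_rpow_smul f s)]

end MellinMeasure

theorem hasMellin_cexp_neg_ofReal_mul {s r : ℝ} (hs : 0 < s) (hr : 0 < r) :
    HasMellin (fun t : ℝ ↦ Complex.exp (-(r * t))) s (Real.Gamma s * (r : ℂ) ^ (-(s : ℂ))) := by
  refine ⟨?_, ?_⟩
  · have hint : Integrable (fun t ↦ Real.exp (-r * t)) (mellinMeasure s) := by
      have h := integrableOn_rpow_mul_exp_neg_mul_rpow (s := s - 1) (by linarith) one_pos hr
      rw [mellinMeasure, integrable_withDensity_iff_integrable_smul' (by fun_prop) (by simp)]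
      refine h.congr ?_
      filter_upwards [ae_restrict_mem measurableSet_Ioi] with t ht
      rw [Real.rpow_one, ENNReal.toReal_ofReal (Real.rpow_nonneg (le_of_lt ht) _), smul_eq_mul]
    rw [mellinConvergent_ofReal_iff_integrable]
    simpa using hint.ofReal (𝕜 := ℂ)
  · have h := Complex.integral_cpow_mul_exp_neg_mul_Ioi (a := s) (by simpa using hs) hr
    rw [mellin, Complex.cpow_neg, ← Complex.Gamma_ofReal, mul_comm, ← Complex.inv_cpow, ← one_div]
    · exact h
    · rw [Complex.arg_ofReal_of_nonneg hr.le]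
      exact Real.pi_ne_zero.symm

theorem Iio_zero_subset_integrableExpSet_mellinMeasure {s : ℝ} (hs : 0 < s) :
    Set.Iio 0 ⊆ integrableExpSet id (mellinMeasure s) := by
  intro r hr
  have h := ((mellinConvergent_ofReal_iff_integrable _ _).1
    (hasMellin_cexp_neg_ofReal_mul hs (neg_pos.2 hr)).1).re
  refine h.congr (.of_forall fun t ↦ ?_)
  simp [← Complex.ofReal_mul, ← Complex.ofReal_exp]

theorem complexMGF_id_mellinMeasure {s : ℝ} (hs : 0 < s) {z : ℂ} (hz : z.re < 0) :
    complexMGF id (mellinMeasure s) z = Real.Gamma s * (-z) ^ (-(s : ℂ)) := by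
  have hinterior : {w : ℂ | w.re < 0} ⊆
      {w | w.re ∈ interior (integrableExpSet id (mellinMeasure s))} := fun w hw ↦
    interior_maximal (Iio_zero_subset_integrableExpSet_mellinMeasure hs) isOpen_Iio hw
  have hpow : AnalyticOnNhd ℂ (fun w : ℂ ↦ Real.Gamma s * (-w) ^ (-(s : ℂ))) {w | w.re < 0} :=
    fun w hw ↦ analyticAt_const.mul
      (analyticAt_id.neg.cpow analyticAt_const (.inl (by simpa using hw)))
  refine (analyticOnNhd_complexMGF.mono hinterior).eqOn_of_preconnected_of_frequently_eq hpow
    (convex_halfSpace_re_lt 0).isPreconnected (z₀ := -1) (by simp) ?_ hz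
  have hreal : Tendsto (fun r : ℝ ↦ (r : ℂ)) (𝓝[≠] (-1)) (𝓝[≠] (-1)) := by
    rw [← Complex.ofReal_one, ← Complex.ofReal_neg]
    exact Complex.continuous_ofReal.continuousWithinAt.tendsto_nhdsWithin
      fun r hr ↦ Complex.ofReal_injective.ne hr
  refine hreal.frequently (Eventually.frequently ?_)
  filter_upwards [nhdsWithin_le_nhds (Iio_mem_nhds (by norm_num : (-1 : ℝ) < 0))] with r hr
  have h := (hasMellin_cexp_neg_ofReal_mul hs (neg_pos.2 hr)).2
  rw [mellin_ofReal_eq_integral] at h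
  simpa [complexMGF] using h

theorem hasMellin_cexp_neg_mul {s : ℝ} (hs : 0 < s) {z : ℂ} (hz : 0 < z.re) :
    HasMellin (fun t : ℝ ↦ Complex.exp (-(z * t))) s (Real.Gamma s * z ^ (-(s : ℂ))) := by
  have hz' : (-z).re < 0 := by simpa using hz
  refine ⟨?_, ?_⟩
  · rw [mellinConvergent_ofReal_iff_integrable]
    simpa using integrable_cexp_mul_of_re_mem_integrableExpSet aemeasurable_id
      (Iio_zero_subset_integrableExpSet_mellinMeasure hs hz')
  · simpa [mellin_ofReal_eq_integral, complexMGF] using complexMGF_id_mellinMeasure hs hz'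

theorem hasMellin_cexp_neg_mul_rpow {s p : ℝ} (hs : 0 < s) (hp : 0 < p) {c : ℂ} (hc : 0 < c.re) :
    HasMellin (fun t : ℝ ↦ Complex.exp (-(c * (t ^ p : ℝ)))) s
      ((p⁻¹ * Real.Gamma (s / p) : ℝ) * c ^ (-(s / p : ℂ))) := by
  obtain ⟨hconv, hvalue⟩ := hasMellin_cexp_neg_mul (div_pos hs hp) hc
  rw [Complex.ofReal_div] at hconv hvalue
  refine ⟨(MellinConvergent.comp_rpow hp.ne').2 hconv, ?_⟩
  rw [mellin_comp_rpow (fun t : ℝ ↦ Complex.exp (-(c * t))), hvalue, abs_of_pos hp,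
    Complex.real_smul]
  push_cast
  ring

/-! ### Abel summation -/

theorem tendsto_mellin_cexp_neg_mul_mul {f : ℝ → ℂ} {s : ℝ} (hf : MellinConvergent f s) :
    Tendsto (fun ε : ℝ ↦ mellin (fun t : ℝ ↦ Complex.exp (-(ε * t)) * f t) s) (𝓝[>] 0)
      (𝓝 (mellin f s)) := by
  simp only [mellin_ofReal_eq_integral]
  rw [mellinConvergent_ofReal_iff_integrable] at hf
  refine tendsto_integral_filter_of_dominated_convergence (fun t ↦ ‖f t‖)
    (.of_forall fun ε ↦ by have := hf.aestronglyMeasurable; fun_prop) ?_ hf.norm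
    (.of_forall fun t ↦ ?_)
  · filter_upwards [self_mem_nhdsWithin] with ε hε
    filter_upwards [ae_mellinMeasure_pos s] with t ht
    rw [norm_mul, Complex.norm_exp]
    refine mul_le_of_le_one_left (norm_nonneg _) (Real.exp_le_one_iff.2 ?_)
    simpa using (mul_pos hε ht).le
  · have hcont : Continuous fun ε : ℝ ↦ Complex.exp (-(ε * t)) * f t := by fun_prop
    exact (hcont.tendsto' 0 (f t) (by simp)).mono_left nhdsWithin_le_nhds

theorem tendsto_mellin_cexp_neg_mul_mul_cexp_neg_mul {s : ℝ} (hs : 0 < s) {c : ℂ} (hc : 0 ≤ c.re)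
    (hc0 : c ≠ 0) :
    Tendsto (fun ε : ℝ ↦ mellin (fun t : ℝ ↦ Complex.exp (-(ε * t)) * Complex.exp (-(c * t))) s)
      (𝓝[>] 0) (𝓝 (Real.Gamma s * c ^ (-(s : ℂ)))) := by
  have hslit : c ∈ Complex.slitPlane := by
    rw [Complex.mem_slitPlane_iff]
    contrapose! hc0
    exact Complex.ext (le_antisymm hc0.1 hc) hc0.2
  have hcont : ContinuousAt (fun ε : ℝ ↦ Real.Gamma s * (ε + c : ℂ) ^ (-(s : ℂ))) 0 :=
    continuousAt_const.mul ((by fun_prop : ContinuousAt (fun ε : ℝ ↦ (ε + c : ℂ)) 0).cpow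
      continuousAt_const (by simpa using hslit))
  have hlim := hcont.tendsto
  rw [Complex.ofReal_zero, zero_add] at hlim
  refine (hlim.mono_left nhdsWithin_le_nhds).congr' ?_
  filter_upwards [self_mem_nhdsWithin] with ε hε
  rw [← (hasMellin_cexp_neg_mul hs (z := ε + c) (by simpa using add_pos_of_pos_of_nonneg hε hc)).2]
  simp only [← Complex.exp_add, add_mul, neg_add]

/-! ### Negative moments from the characteristic function -/

theorem integrable_of_tendsto_integral_of_nonneg {α ι : Type*} [MeasurableSpace α] {μ : Measure α}
    {u : Filter ι} [u.NeBot] [u.IsCountablyGenerated] {G : ι → α → ℝ} {g : α → ℝ} {I : ℝ}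
    (hmeas : ∀ i, AEStronglyMeasurable (G i) μ) (hint : ∀ᶠ i in u, Integrable (G i) μ)
    (hnonneg : ∀ᶠ i in u, 0 ≤ᵐ[μ] G i) (hG : ∀ᵐ x ∂μ, Tendsto (fun i ↦ G i x) u (𝓝 (g x)))
    (hI : Tendsto (fun i ↦ ∫ x, G i x ∂μ) u (𝓝 I)) : Integrable g μ := by
  refine ⟨aestronglyMeasurable_of_tendsto_ae u hmeas hG, ?_⟩
  have hlintegral : Tendsto (fun i ↦ ∫⁻ x, ‖G i x‖ₑ ∂μ) u (𝓝 (ENNReal.ofReal I)) := by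
    refine ((ENNReal.continuous_ofReal.tendsto I).comp hI).congr' ?_
    filter_upwards [hint, hnonneg] with i hint_i hnonneg_i
    rw [Function.comp_apply, ← ofReal_integral_norm_eq_lintegral_enorm hint_i]
    congr 1
    refine integral_congr_ae (hnonneg_i.mono fun x hx ↦ (Real.norm_of_nonneg hx).symm)
  calc ∫⁻ x, ‖g x‖ₑ ∂μ
      = ∫⁻ x, liminf (fun i ↦ ‖G i x‖ₑ) u ∂μ :=
        lintegral_congr_ae (hG.mono fun x hx ↦ hx.enorm.liminf_eq.symm)
    _ ≤ liminf (fun i ↦ ∫⁻ x, ‖G i x‖ₑ ∂μ) u := lintegral_liminf_le' fun i ↦ (hmeas i).enorm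
    _ = ENNReal.ofReal I := hlintegral.liminf_eq
    _ < ⊤ := ENNReal.ofReal_lt_top

theorem mellin_cexp_neg_mul_mul_charFun {μ : Measure ℝ} [IsFiniteMeasure μ] {s : ℝ} (hs : 0 < s)
    {z : ℂ} (hz : 0 < z.re) :
    mellin (fun t : ℝ ↦ Complex.exp (-(z * t)) * charFun μ t) s =
      Real.Gamma s * ∫ x : ℝ, (z - x * Complex.I) ^ (-(s : ℂ)) ∂μ := by
  have hnorm : Integrable (fun t : ℝ ↦ Complex.exp (-(z * t))) (mellinMeasure s) :=
    (mellinConvergent_ofReal_iff_integrable _ _).1 (hasMellin_cexp_neg_mul hs hz).1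
  have hprod : Integrable (Function.uncurry fun t x : ℝ ↦
      Complex.exp (-(z * t)) * Complex.exp (t * x * Complex.I)) ((mellinMeasure s).prod μ) := by
    refine (hnorm.mul_prod (integrable_const (1 : ℂ))).mono (by fun_prop) (.of_forall fun q ↦ ?_)
    simp [Function.uncurry, ← Complex.ofReal_mul, Complex.norm_exp_ofReal_mul_I]
  have hinner (x : ℝ) : ∫ t, Complex.exp (-(z * t)) * Complex.exp (t * x * Complex.I)
      ∂mellinMeasure s = Real.Gamma s * (z - x * Complex.I) ^ (-(s : ℂ)) := by
    rw [← (hasMellin_cexp_neg_mul hs (z := z - x * Complex.I) (by simpa using hz)).2,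
      mellin_ofReal_eq_integral]
    congr 1 with t
    rw [← Complex.exp_add]
    ring_nf
  simp only [mellin_ofReal_eq_integral, charFun_apply_real, ← integral_const_mul]
  rw [integral_integral_swap hprod]
  simp only [hinner]

theorem norm_cpow_neg_le_rpow_abs_im {z : ℂ} {s : ℝ} (hs : 0 ≤ s) (hz : z.im ≠ 0) :
    ‖z ^ (-(s : ℂ))‖ ≤ |z.im| ^ (-s) := by
  rw [← Complex.ofReal_neg, Complex.norm_cpow_real]
  exact Real.rpow_le_rpow_of_nonpos (abs_pos.2 hz) (Complex.abs_im_le_norm z) (neg_nonpos.2 hs)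

theorem re_cpow_neg_nonneg {z : ℂ} {s : ℝ} (hs : 0 ≤ s) (hs1 : s ≤ 1) (hz : 0 ≤ z.re) :
    0 ≤ (z ^ (-(s : ℂ))).re := by
  rw [← Complex.ofReal_neg, Complex.cpow_ofReal_re, mul_neg, Real.cos_neg]
  have harg := Complex.abs_arg_le_pi_div_two_iff.2 hz
  have hbound : |z.arg * s| ≤ Real.pi / 2 := by
    rw [abs_mul, abs_of_nonneg hs]
    exact (mul_le_of_le_one_right (abs_nonneg _) hs1).trans harg
  exact mul_nonneg (Real.rpow_nonneg (norm_nonneg _) _)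
    (Real.cos_nonneg_of_neg_pi_div_two_le_of_le (abs_le.1 hbound).1 (abs_le.1 hbound).2)

theorem re_neg_ofReal_mul_I_cpow_neg {x : ℝ} (hx : x ≠ 0) (s : ℝ) :
    ((-(x * Complex.I)) ^ (-(s : ℂ))).re = Real.cos (Real.pi * s / 2) * |x| ^ (-s) := by
  have harg : |(-(x * Complex.I)).arg| = Real.pi / 2 := by
    refine le_antisymm (Complex.abs_arg_le_pi_div_two_iff.2 (by simp)) (not_lt.1 fun h ↦ ?_)
    simpa [hx] using Complex.abs_arg_lt_pi_div_two_iff.1 h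
  rw [← Complex.ofReal_neg, Complex.cpow_ofReal_re, ← Real.cos_abs, abs_mul, harg, abs_neg,
    norm_neg, norm_mul, Complex.norm_I, Complex.norm_real, Real.norm_eq_abs, mul_one, mul_comm,
    ← Real.cos_abs (Real.pi * s / 2), abs_div, abs_mul, abs_of_pos Real.pi_pos, abs_two,
    div_mul_eq_mul_div]

theorem tendsto_re_sub_mul_I_cpow_neg {x : ℝ} (hx : x ≠ 0) (s : ℝ) :
    Tendsto (fun ε : ℝ ↦ ((ε - x * Complex.I) ^ (-(s : ℂ))).re) (𝓝[>] 0)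
      (𝓝 (Real.cos (Real.pi * s / 2) * |x| ^ (-s))) := by
  have hslit : ((0 : ℝ) - x * Complex.I : ℂ) ∈ Complex.slitPlane := by
    simp [Complex.mem_slitPlane_iff, hx]
  have hcont : ContinuousAt (fun ε : ℝ ↦ ((ε - x * Complex.I) ^ (-(s : ℂ))).re) 0 :=
    Complex.continuous_re.continuousAt.comp
      ((by fun_prop : ContinuousAt (fun ε : ℝ ↦ (ε - x * Complex.I : ℂ)) 0).cpow
        continuousAt_const hslit)
  have hlim := hcont.tendsto
  rw [Complex.ofReal_zero, zero_sub, re_neg_ofReal_mul_I_cpow_neg hx] at hlim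
  exact hlim.mono_left nhdsWithin_le_nhds

section NegativeMoment

variable {μ : Measure ℝ} [IsFiniteMeasure μ] {s : ℝ} {M : ℂ}

theorem integrable_sub_mul_I_cpow_neg {z : ℂ} (hs : 0 ≤ s) (hz : 0 < z.re) :
    Integrable (fun x : ℝ ↦ (z - x * Complex.I) ^ (-(s : ℂ))) μ := by
  have hmeas : Measurable fun x : ℝ ↦ (z - x * Complex.I) ^ (-(s : ℂ)) := by fun_prop
  refine .of_bound hmeas.aestronglyMeasurable (z.re ^ (-s)) (.of_forall fun x ↦ ?_)
  rw [← Complex.ofReal_neg, Complex.norm_cpow_real]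
  have hle := Complex.re_le_norm (z - x * Complex.I)
  rw [Complex.sub_re, Complex.re_ofReal_mul, Complex.I_re, mul_zero, sub_zero] at hle
  exact Real.rpow_le_rpow_of_nonpos hz hle (neg_nonpos.2 hs)

theorem tendsto_integral_re_sub_mul_I_cpow_neg (hs : 0 < s)
    (hM : Tendsto (fun ε : ℝ ↦ mellin (fun t : ℝ ↦ Complex.exp (-(ε * t)) * charFun μ t) s)
      (𝓝[>] 0) (𝓝 M)) :
    Tendsto (fun ε : ℝ ↦ ∫ x : ℝ, ((ε - x * Complex.I) ^ (-(s : ℂ))).re ∂μ) (𝓝[>] 0)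
      (𝓝 (M.re / Real.Gamma s)) := by
  refine (((Complex.continuous_re.tendsto M).comp hM).div_const _).congr' ?_
  filter_upwards [self_mem_nhdsWithin] with ε hε
  have hz : 0 < (ε : ℂ).re := hε
  rw [Function.comp_apply, mellin_cexp_neg_mul_mul_charFun hs hz, Complex.re_ofReal_mul,
    mul_div_cancel_left₀ _ (Real.Gamma_pos_of_pos hs).ne']
  exact (integral_re (integrable_sub_mul_I_cpow_neg hs.le hz)).symm

theorem integrable_rpow_neg_abs_of_tendsto_mellin (hs : 0 < s) (hs1 : s < 1) (h0 : μ {0} = 0)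
    (hM : Tendsto (fun ε : ℝ ↦ mellin (fun t : ℝ ↦ Complex.exp (-(ε * t)) * charFun μ t) s)
      (𝓝[>] 0) (𝓝 M)) :
    Integrable (fun x ↦ |x| ^ (-s)) μ := by
  have hcos := cos_pi_mul_div_two_pos (by rwa [abs_of_pos hs] : |s| < 1)
  have hmul : Integrable (fun x ↦ Real.cos (Real.pi * s / 2) * |x| ^ (-s)) μ := by
    refine integrable_of_tendsto_integral_of_nonneg (u := 𝓝[>] (0 : ℝ))
      (G := fun ε x : ℝ ↦ ((ε - x * Complex.I) ^ (-(s : ℂ))).re) (fun ε ↦ ?_) ?_ ?_ ?_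
      (tendsto_integral_re_sub_mul_I_cpow_neg hs hM)
    · exact Measurable.aestronglyMeasurable (by fun_prop)
    · filter_upwards [self_mem_nhdsWithin] with ε hε
      exact (integrable_sub_mul_I_cpow_neg hs.le (by simpa using hε)).re
    · filter_upwards [self_mem_nhdsWithin] with ε hε
      exact .of_forall fun x ↦ re_cpow_neg_nonneg hs.le hs1.le (by simpa using le_of_lt hε)
    · filter_upwards [compl_mem_ae_iff.2 h0] with x hx using tendsto_re_sub_mul_I_cpow_neg hx s
  exact (integrable_const_mul_iff (isUnit_iff_ne_zero.2 hcos.ne') _).1 hmul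

theorem Gamma_mul_cos_mul_integral_rpow_neg_abs_of_tendsto_mellin (hs : 0 < s) (hs1 : s < 1)
    (h0 : μ {0} = 0)
    (hM : Tendsto (fun ε : ℝ ↦ mellin (fun t : ℝ ↦ Complex.exp (-(ε * t)) * charFun μ t) s)
      (𝓝[>] 0) (𝓝 M)) :
    Real.Gamma s * (Real.cos (Real.pi * s / 2) * ∫ x, |x| ^ (-s) ∂μ) = M.re := by
  have hlim : Tendsto (fun ε : ℝ ↦ ∫ x : ℝ, ((ε - x * Complex.I) ^ (-(s : ℂ))).re ∂μ) (𝓝[>] 0)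
      (𝓝 (∫ x, Real.cos (Real.pi * s / 2) * |x| ^ (-s) ∂μ)) := by
    refine tendsto_integral_filter_of_dominated_convergence (fun x ↦ |x| ^ (-s))
      (.of_forall fun ε ↦ Measurable.aestronglyMeasurable (by fun_prop)) (.of_forall fun ε ↦ ?_)
      (integrable_rpow_neg_abs_of_tendsto_mellin hs hs1 h0 hM) ?_
    · filter_upwards [compl_mem_ae_iff.2 h0] with x hx
      have hbound := norm_cpow_neg_le_rpow_abs_im (z := ε - x * Complex.I) hs.le (by simpa using hx)
      exact (Complex.abs_re_le_norm _).trans (by simpa using hbound)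
    · filter_upwards [compl_mem_ae_iff.2 h0] with x hx using tendsto_re_sub_mul_I_cpow_neg hx s
  rw [← integral_const_mul,
    tendsto_nhds_unique hlim (tendsto_integral_re_sub_mul_I_cpow_neg hs hM),
    mul_div_cancel₀ _ (Real.Gamma_pos_of_pos hs).ne']

end NegativeMoment

/-! ### Moments of `log |X|` for strictly stable `X` -/

theorem abs_div_le_one_of_abs_le {r θ : ℝ} (hθ : |θ| ≤ r) : |θ / r| ≤ 1 := by
  rw [abs_div]
  exact div_le_one_of_le₀ (hθ.trans (le_abs_self r)) (abs_nonneg r)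

/-- The constant `c` for which a strictly stable law with `ν = r ^ 2` has characteristic function
`exp (-c * t ^ r⁻¹)` at `t > 0`. -/
noncomputable def stableScale (r θ τ : ℝ) : ℂ :=
  Complex.exp (((τ + Real.eulerMascheroniConstant * (1 - r)) / r : ℝ)
    - (Real.pi * (θ / r) / 2 : ℝ) * Complex.I)

theorem re_stableScale (r θ τ : ℝ) :
    (stableScale r θ τ).re = Real.exp ((τ + Real.eulerMascheroniConstant * (1 - r)) / r) *
      Real.cos (Real.pi * (θ / r) / 2) := by
  rw [stableScale, Complex.exp_re, Complex.sub_re, Complex.sub_im, Complex.re_ofReal_mul,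
    Complex.im_ofReal_mul, Complex.ofReal_re, Complex.ofReal_im, Complex.I_re, Complex.I_im,
    mul_zero, mul_one, sub_zero, zero_sub, Real.cos_neg]

theorem re_stableScale_nonneg {r θ : ℝ} (τ : ℝ) (hθ : |θ| ≤ r) : 0 ≤ (stableScale r θ τ).re := by
  obtain ⟨hlo, hhi⟩ := abs_le.1 (abs_div_le_one_of_abs_le hθ)
  rw [re_stableScale]
  exact mul_nonneg (Real.exp_nonneg _) (Real.cos_nonneg_of_neg_pi_div_two_le_of_le
    (by nlinarith [Real.pi_pos]) (by nlinarith [Real.pi_pos]))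

theorem re_stableScale_pos {r θ : ℝ} (τ : ℝ) (hθ : |θ| < r) : 0 < (stableScale r θ τ).re := by
  have hr : 0 < r := (abs_nonneg θ).trans_lt hθ
  have habs : |θ / r| < 1 := by rwa [abs_div, abs_of_pos hr, div_lt_one hr]
  rw [re_stableScale]
  exact mul_pos (Real.exp_pos _) (cos_pi_mul_div_two_pos habs)

theorem re_stableScale_cpow_neg {r θ : ℝ} (τ s : ℝ) (hr : 0 < r) (hθ : |θ| ≤ r) :
    (stableScale r θ τ ^ (-(s / (r⁻¹ : ℝ) : ℂ))).re =
      Real.exp (-(s * (τ + Real.eulerMascheroniConstant * (1 - r)))) *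
        Real.cos (Real.pi * (θ * s) / 2) := by
  obtain ⟨hlo, hhi⟩ := abs_le.1 (abs_div_le_one_of_abs_le hθ)
  have hlog : Complex.log (stableScale r θ τ) =
      ((τ + Real.eulerMascheroniConstant * (1 - r)) / r : ℝ)
        - (Real.pi * (θ / r) / 2 : ℝ) * Complex.I := by
    rw [stableScale, Complex.log_exp] <;>
      rw [Complex.sub_im, Complex.im_ofReal_mul, Complex.ofReal_im, Complex.I_im] <;>
      nlinarith [Real.pi_pos]
  have hexponent : Complex.log (stableScale r θ τ) * -(s / (r⁻¹ : ℝ)) =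
      (-(s * (τ + Real.eulerMascheroniConstant * (1 - r))) : ℝ)
        + (Real.pi * (θ * s) / 2 : ℝ) * Complex.I := by
    have hr0 : (r : ℂ) ≠ 0 := mod_cast hr.ne'
    rw [hlog]
    push_cast
    field_simp
    ring
  rw [Complex.cpow_def_of_ne_zero (x := stableScale r θ τ) (Complex.exp_ne_zero _), hexponent,
    Complex.exp_re]
  simp

theorem exp_stableLogCgf_neg {r θ s : ℝ} (τ : ℝ) (hr : 0 < r) (hθ : |θ| ≤ 1) (hs : 0 < s)
    (hs1 : s < 1) :
    Real.Gamma s * (Real.cos (Real.pi * s / 2) * Real.exp (stableLogCgf r θ τ (-s))) =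
      r * Real.Gamma (s * r) * (Real.exp (-(s * (τ + Real.eulerMascheroniConstant * (1 - r)))) *
        Real.cos (Real.pi * (θ * s) / 2)) := by
  have hcos_s := cos_pi_mul_div_two_pos (by rwa [abs_of_pos hs] : |s| < 1)
  have hcos_θs : 0 < Real.cos (Real.pi * (θ * s) / 2) := cos_pi_mul_div_two_pos <| by
    rw [abs_mul, abs_of_pos hs]
    exact (mul_le_of_le_one_left hs.le hθ).trans_lt hs1
  have hsr : 0 < s * r := mul_pos hs hr
  have hΓs := Real.Gamma_pos_of_pos hs
  have hΓsr := Real.Gamma_pos_of_pos hsr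
  have hcgf : stableLogCgf r θ τ (-s) = -(s * (τ + Real.eulerMascheroniConstant * (1 - r)))
      + Real.log (s * r * Real.Gamma (s * r)) - Real.log (s * Real.Gamma s)
      + Real.log (Real.cos (Real.pi * (θ * s) / 2)) - Real.log (Real.cos (Real.pi * s / 2)) := by
    rw [stableLogCgf, ← Real.Gamma_add_one hsr.ne', ← Real.Gamma_add_one hs.ne',
      ← Real.cos_neg (Real.pi * (θ * s) / 2), ← Real.cos_neg (Real.pi * s / 2)]
    ring_nf
  rw [hcgf, Real.exp_sub, Real.exp_add, Real.exp_sub, Real.exp_add, Real.exp_log hcos_s,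
    Real.exp_log hcos_θs, Real.exp_log (mul_pos hsr hΓsr), Real.exp_log (mul_pos hs hΓs)]
  field_simp

namespace IsStrictlyStable

variable {Ω : Type*} [MeasureSpace Ω] {X : Ω → ℝ} {ν θ τ : ℝ}

theorem measurable (hX : IsStrictlyStable X ν θ τ) : Measurable X :=
  hX.1

theorem nu_pos (hX : IsStrictlyStable X ν θ τ) : 0 < ν :=
  lt_of_lt_of_le (by norm_num) hX.2.1

theorem sqrt_pos (hX : IsStrictlyStable X ν θ τ) : 0 < √ν :=
  Real.sqrt_pos.2 hX.nu_pos

theorem abs_theta_le_one (hX : IsStrictlyStable X ν θ τ) : |θ| ≤ 1 :=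
  (le_min_iff.1 hX.2.2.1).1

theorem abs_theta_le_two_mul_sqrt_sub_one (hX : IsStrictlyStable X ν θ τ) : |θ| ≤ 2 * √ν - 1 :=
  (le_min_iff.1 hX.2.2.1).2

theorem abs_theta_le_sqrt (hX : IsStrictlyStable X ν θ τ) : |θ| ≤ √ν := by
  linarith [hX.abs_theta_le_one, hX.abs_theta_le_two_mul_sqrt_sub_one]

theorem abs_theta_lt_sqrt_or_sqrt_eq_one (hX : IsStrictlyStable X ν θ τ) :
    |θ| < √ν ∨ √ν = 1 := by
  refine hX.abs_theta_le_sqrt.lt_or_eq.imp_right fun h ↦ ?_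
  linarith [hX.abs_theta_le_one, hX.abs_theta_le_two_mul_sqrt_sub_one]

theorem measure_eq_zero (hX : IsStrictlyStable X ν θ τ) : (ℙ : Measure Ω) {ω | X ω = 0} = 0 :=
  hX.2.2.2.1

theorem integrable_abs_log_abs_pow (hX : IsStrictlyStable X ν θ τ) (n : ℕ) :
    Integrable fun ω ↦ |(Real.log |X ω|)| ^ n :=
  hX.2.2.2.2.1 n

theorem map_singleton_zero (hX : IsStrictlyStable X ν θ τ) :
    (Measure.map X (ℙ : Measure Ω)) {0} = 0 := by
  rw [Measure.map_apply hX.measurable (measurableSet_singleton 0)]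
  exact hX.measure_eq_zero

theorem charFun_map_of_pos (hX : IsStrictlyStable X ν θ τ) {t : ℝ} (ht : 0 < t) :
    charFun (Measure.map X (ℙ : Measure Ω)) t =
      Complex.exp (-(stableScale (√ν) θ τ * (t ^ (√ν)⁻¹ : ℝ))) := by
  have hν : ν ^ (-(1 / 2) : ℝ) = (√ν)⁻¹ := by
    rw [Real.rpow_neg hX.nu_pos.le, ← Real.sqrt_eq_rpow]
  have hr0 : (√ν : ℂ) ≠ 0 := mod_cast hX.sqrt_pos.ne'
  have hcharFun := hX.2.2.2.2.2 t ht.ne'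
  rw [hν, abs_of_pos ht, Real.sign_of_pos ht] at hcharFun
  rw [charFun_apply_real, integral_map hX.measurable.aemeasurable (by fun_prop), stableScale,
    Real.rpow_def_of_pos ht, Complex.ofReal_exp, ← Complex.exp_add]
  convert hcharFun using 4
  · ring
  · push_cast
    field_simp
    ring

theorem tendsto_mellin_charFun_map (hX : IsStrictlyStable X ν θ τ) {s : ℝ} (hs : 0 < s) :
    Tendsto (fun ε : ℝ ↦ mellin
        (fun t : ℝ ↦ Complex.exp (-(ε * t)) * charFun (Measure.map X (ℙ : Measure Ω)) t) s)
      (𝓝[>] 0) (𝓝 ((√ν * Real.Gamma (s * √ν) : ℝ) *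
        stableScale (√ν) θ τ ^ (-(s / ((√ν)⁻¹ : ℝ) : ℂ)))) := by
  have hcongr (ε : ℝ) : mellin
      (fun t : ℝ ↦ Complex.exp (-(ε * t)) * charFun (Measure.map X (ℙ : Measure Ω)) t) s =
      mellin (fun t : ℝ ↦ Complex.exp (-(ε * t)) *
        Complex.exp (-(stableScale (√ν) θ τ * (t ^ (√ν)⁻¹ : ℝ)))) s := by
    rw [mellin_ofReal_eq_integral, mellin_ofReal_eq_integral]
    refine integral_congr_ae ((ae_mellinMeasure_pos s).mono fun t ht ↦ ?_)
    simp only [hX.charFun_map_of_pos ht]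
  simp only [hcongr]
  rcases hX.abs_theta_lt_sqrt_or_sqrt_eq_one with hθ | hν
  · obtain ⟨hconv, hvalue⟩ := hasMellin_cexp_neg_mul_rpow hs (inv_pos.2 hX.sqrt_pos)
      (re_stableScale_pos τ hθ)
    rw [inv_inv, div_inv_eq_mul] at hvalue
    exact hvalue ▸ tendsto_mellin_cexp_neg_mul_mul hconv
  · simpa [hν] using tendsto_mellin_cexp_neg_mul_mul_cexp_neg_mul hs
      (re_stableScale_nonneg τ (hν ▸ hX.abs_theta_le_sqrt)) (Complex.exp_ne_zero _)

theorem ae_rpow_abs_eq_exp (hX : IsStrictlyStable X ν θ τ) (t : ℝ) :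
    (fun ω ↦ |X ω| ^ t) =ᵐ[ℙ] fun ω ↦ Real.exp (t * Real.log |X ω|) := by
  filter_upwards [compl_mem_ae_iff.2 hX.measure_eq_zero] with ω hω
  rw [Real.rpow_def_of_pos (abs_pos.2 hω), mul_comm]

variable [IsFiniteMeasure (ℙ : Measure Ω)]

theorem mem_integrableExpSet_log_abs (hX : IsStrictlyStable X ν θ τ) {t : ℝ}
    (ht : t ∈ Set.Ioo (-1) 0) : t ∈ integrableExpSet (fun ω ↦ Real.log |X ω|) ℙ := by
  have hint := integrable_rpow_neg_abs_of_tendsto_mellin (neg_pos.2 ht.2) (neg_lt.1 ht.1)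
    hX.map_singleton_zero (hX.tendsto_mellin_charFun_map (neg_pos.2 ht.2))
  rw [neg_neg] at hint
  exact (hint.comp_measurable hX.measurable).congr (hX.ae_rpow_abs_eq_exp t)

theorem mgf_log_abs (hX : IsStrictlyStable X ν θ τ) {t : ℝ} (ht : t ∈ Set.Ioo (-1) 0) :
    mgf (fun ω ↦ Real.log |X ω|) ℙ t = Real.exp (stableLogCgf (√ν) θ τ t) := by
  obtain ⟨s, rfl⟩ : ∃ s, t = -s := ⟨-t, (neg_neg t).symm⟩
  have hs : 0 < s := neg_lt_zero.1 ht.2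
  have hs1 : s < 1 := neg_lt_neg_iff.1 ht.1
  have hcos := cos_pi_mul_div_two_pos (by rwa [abs_of_pos hs] : |s| < 1)
  have hmoment := Gamma_mul_cos_mul_integral_rpow_neg_abs_of_tendsto_mellin hs hs1
    hX.map_singleton_zero (hX.tendsto_mellin_charFun_map hs)
  rw [Complex.re_ofReal_mul, re_stableScale_cpow_neg τ s hX.sqrt_pos hX.abs_theta_le_sqrt,
    ← exp_stableLogCgf_neg τ hX.sqrt_pos hX.abs_theta_le_one hs hs1,
    integral_map hX.measurable.aemeasurable
      (Measurable.aestronglyMeasurable (by fun_prop))] at hmoment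
  rw [integral_congr_ae (hX.ae_rpow_abs_eq_exp (-s))] at hmoment
  exact mul_left_cancel₀ hcos.ne' (mul_left_cancel₀ (Real.Gamma_pos_of_pos hs).ne' hmoment)

theorem integral_log_abs_pow (hX : IsStrictlyStable X ν θ τ) (n : ℕ) :
    ∫ ω, Real.log |X ω| ^ n = iteratedDeriv n (fun t ↦ Real.exp (stableLogCgf (√ν) θ τ t)) 0 := by
  have hmeas : Measurable fun ω ↦ Real.log |X ω| := hX.measurable.abs.log
  refine integral_pow_eq_iteratedDeriv_of_mgf_eq hmeas.aemeasurable ?_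
    (analyticAt_stableLogCgf _ _ _).rexp ?_
  · refine (integrable_norm_iff (hmeas.pow_const n).aestronglyMeasurable).1 ?_
    simpa only [norm_pow, Real.norm_eq_abs] using hX.integrable_abs_log_abs_pow n
  · filter_upwards [Ioo_mem_nhdsLT (by norm_num : (-1 : ℝ) < 0)] with t ht
    exact ⟨hX.mem_integrableExpSet_log_abs ht, hX.mgf_log_abs ht⟩

theorem integral_log_abs_pow_succ (hX : IsStrictlyStable X ν θ τ) (n : ℕ) :
    ∫ ω, Real.log |X ω| ^ (n + 1) = ∑ i ∈ Finset.range (n + 1),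
      (n.choose i : ℝ) * stableLogCumulant (√ν) θ τ (i + 1) * ∫ ω, Real.log |X ω| ^ (n - i) := by
  simp only [hX.integral_log_abs_pow, iteratedDeriv_succ_exp_comp (analyticAt_stableLogCgf _ _ _),
    iteratedDeriv_stableLogCgf_zero]

end IsStrictlyStable

theorem stableLogCumulant_sqrt_of_odd {ν : ℝ} (θ τ : ℝ) (hν : 0 ≤ ν) {n : ℕ} (hn : 1 < n)
    (hodd : Odd n) : stableLogCumulant (√ν) θ τ n =
      (n - 1).factorial * zetaR n * (ν ^ ((n : ℝ) / 2) - 1) := by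
  rw [stableLogCumulant_of_odd _ _ _ hn hodd, Real.rpow_div_two_eq_sqrt _ hν, Real.rpow_natCast]

section EvenCumulants

variable {ν : ℝ} (θ τ : ℝ)

theorem stableLogCumulant_sqrt_two (hν : 0 ≤ ν) : stableLogCumulant (√ν) θ τ 2 =
    Real.pi ^ 2 / 4 * (1 - θ ^ 2) + Real.pi ^ 2 / 6 * (ν - 1) := by
  rw [stableLogCumulant_of_even _ _ _ one_lt_two even_two, Real.sq_sqrt hν]
  simp only [Nat.cast_ofNat, zetaR_two, Nat.reduceSub, Nat.factorial_one, Nat.cast_one]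
  ring

theorem stableLogCumulant_sqrt_four (hν : 0 ≤ ν) : stableLogCumulant (√ν) θ τ 4 =
    Real.pi ^ 4 * ((1 - θ ^ 4) / 8 + (ν ^ 2 - 1) / 15) := by
  rw [stableLogCumulant_of_even _ _ _ (by norm_num) (by decide), pow_mul √ν 2 2, Real.sq_sqrt hν]
  simp only [Nat.cast_ofNat, zetaR_four, Nat.reduceSub, Nat.factorial]
  push_cast
  ring

theorem stableLogCumulant_sqrt_six (hν : 0 ≤ ν) : stableLogCumulant (√ν) θ τ 6 =
    8 * Real.pi ^ 6 * ((1 - θ ^ 6) / 32 + (ν ^ 3 - 1) / 63) := by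
  rw [stableLogCumulant_of_even _ _ _ (by norm_num) (by decide), pow_mul √ν 2 3, Real.sq_sqrt hν]
  simp only [Nat.cast_ofNat, zetaR_six, Nat.reduceSub, Nat.factorial]
  push_cast
  ring

end EvenCumulants

theorem seventh_log_moment_of_strictlyStable {Ω : Type*} [MeasureSpace Ω]
    [IsProbabilityMeasure (ℙ : Measure Ω)] (X : Ω → ℝ) (ν θ τ : ℝ)
    (hX : IsStrictlyStable X ν θ τ)
    (DV : ℝ) (hDV : DV = Real.pi ^ 2 / 4 * (1 - θ ^ 2) + Real.pi ^ 2 / 6 * (ν - 1)) :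
    (∫ ω, (Real.log |X ω|) ^ 7) =
      τ ^ 7 + 21 * τ ^ 5 * DV + 70 * τ ^ 4 * zetaR 3 * (ν ^ ((3 : ℝ) / 2) - 1)
        + 35 * τ ^ 3 * Real.pi ^ 4 * ((1 - θ ^ 4) / 8 + (ν ^ 2 - 1) / 15)
        + 105 * τ * DV ^ 3
        + 420 * τ ^ 2 * zetaR 3 * (ν ^ ((3 : ℝ) / 2) - 1) * DV
        + 504 * τ ^ 2 * zetaR 5 * (ν ^ ((5 : ℝ) / 2) - 1)
        + 210 * zetaR 3 * (ν ^ ((3 : ℝ) / 2) - 1) * DV ^ 2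
        + 105 * τ * Real.pi ^ 4 * ((1 - θ ^ 4) / 8 + (ν ^ 2 - 1) / 15) * DV
        + 56 * τ * Real.pi ^ 6 * ((1 - θ ^ 6) / 32 + (ν ^ 3 - 1) / 63)
        + 504 * zetaR 5 * (ν ^ ((5 : ℝ) / 2) - 1) * DV
        + 70 * zetaR 3 * (ν ^ ((3 : ℝ) / 2) - 1) * Real.pi ^ 4 *
            ((1 - θ ^ 4) / 8 + (ν ^ 2 - 1) / 15)
        + 280 * τ * zetaR 3 ^ 2 * (ν ^ ((3 : ℝ) / 2) - 1) ^ 2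
        + 720 * zetaR 7 * (ν ^ ((7 : ℝ) / 2) - 1)
        + 105 * τ ^ 3 * DV ^ 2 := by
  have hν := hX.nu_pos.le
  have hκ₃ := stableLogCumulant_sqrt_of_odd θ τ hν (n := 3) (by norm_num) (by decide)
  have hκ₅ := stableLogCumulant_sqrt_of_odd θ τ hν (n := 5) (by norm_num) (by decide)
  have hκ₇ := stableLogCumulant_sqrt_of_odd θ τ hν (n := 7) (by norm_num) (by decide)
  rw [seventh_moment_eq_bell (m := fun n ↦ ∫ ω, Real.log |X ω| ^ n) (by simp)
      hX.integral_log_abs_pow_succ,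
    stableLogCumulant_one, stableLogCumulant_sqrt_two θ τ hν, ← hDV, hκ₃,
    stableLogCumulant_sqrt_four θ τ hν, hκ₅, stableLogCumulant_sqrt_six θ τ hν, hκ₇]
  simp only [Nat.cast_ofNat, Nat.reduceSub, Nat.factorial]
  push_cast
  ring
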